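/- Let 1 < p < q, s ≥ 1, β < 1 and (α+β)p > 1. Then ∫_1^∞ [(p/q) ∫_1^{s·x} (v^p−1)^{1/q−1} v^{p−2} dv] · x^{−αp} (x^p−1)^{−β} dx = (1/(pq)) B(1/p−1/q, 1/q) B(1−β, β+α−1/p) + (s^{p/q−1}/(p−q)) B(β+α−1/q, 1−β) · ∑_{k=0}^∞ [(1−1/q)_k (β+α−1/q)_k (1/p−1/q)_k / ((α+1−1/q)_k (1/p−1/q+1)_k · k!)] s^{−pk}. (That is, ∫_1^∞ arccosh_{p,q}(sx) x^{−αp}(x^p−1)^{−β} dx = (1/(pq)) B(1/p−1/q,1/q) B(1−β, β+α−1/p) + (s^{p/q−1}/(p−q)) B(β+α−1/q, 1−β) ₃F₂(1−1/q, β+α−1/q, 1/p−1/q; α+1−1/q, 1/p−1/q+1; s^{−p}).) -/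

import Mathlib

open MeasureTheory

/-- Ascending Pochhammer symbol `(a)_k = a (a+1) ⋯ (a+k-1)`. -/
noncomputable def poch (a : ℝ) (k : ℕ) : ℝ := ∏ i ∈ Finset.range k, (a + i)

/-- Euler's beta function `B(a,b) = Γ(a)Γ(b)/Γ(a+b)`. -/
noncomputable def betaR (a b : ℝ) : ℝ := Real.Gamma a * Real.Gamma b / Real.Gamma (a + b)

theorem poch_pos {a : ℝ} (ha : 0 < a) (k : ℕ) : 0 < poch a k := by
  unfold poch
  exact Finset.prod_pos fun i _ => by positivity

theorem poch_succ (a : ℝ) (k : ℕ) : poch a (k+1) = poch a k * (a + k) := by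
  unfold poch
  rw [Finset.prod_range_succ]

theorem poch_eq_asc (a : ℝ) (k : ℕ) : poch a k = (ascPochhammer ℝ k).eval a := by
  induction k with
  | zero => simp [poch]
  | succ n ih => rw [poch_succ, ih, ascPochhammer_succ_eval]

theorem binom_hasSum (a z : ℝ) (h0 : 0 ≤ z) (h1 : z < 1) :
    HasSum (fun k : ℕ => poch a k / (Nat.factorial k : ℝ) * z ^ k) ((1 - z) ^ (-a)) := by
  have h := (Real.one_div_one_sub_rpow_hasFPowerSeriesOnBall_zero a).hasSum (y := z) (by
    simp [Metric.mem_eball, edist_dist, abs_of_nonneg h0]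
    exact h1)
  have e : ∀ k : ℕ, Ring.choose (a + k - 1) k = poch a k / (Nat.factorial k : ℝ) := by
    intro k
    rw [← Ring.multichoose_eq]
    have := Ring.factorial_nsmul_multichoose_eq_ascPochhammer a k
    rw [Polynomial.ascPochhammer_smeval_eq_eval, ← poch_eq_asc] at this
    rw [← this, nsmul_eq_mul]
    field_simp
  rw [Real.rpow_neg (by linarith), ← one_div]
  have e2 : (fun k : ℕ => poch a k / (Nat.factorial k : ℝ) * z ^ k) =
      fun n => (FormalMultilinearSeries.ofScalars ℝ
        (fun n : ℕ => Ring.choose (a + n - 1) n) n) fun _ => z := by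
    funext k
    simp [e, mul_comm]
  rw [e2, show (1 - z) = 1 - (0 + z) by ring]
  exact h

theorem Gamma_add_nat {x : ℝ} (hx : 0 < x) (k : ℕ) :
    Real.Gamma (x + k) = poch x k * Real.Gamma x := by
  induction k with
  | zero => simp [poch]
  | succ n ih =>
    rw [poch_succ, Nat.cast_succ, ← add_assoc, Real.Gamma_add_one (by positivity), ih]
    ring

theorem betaR_add_nat {x y : ℝ} (hx : 0 < x) (hy : 0 < y) (k : ℕ) :
    betaR (x + k) y = betaR x y * (poch x k / poch (x + y) k) := by
  unfold betaR
  have e : x + k + y = x + y + k := by ring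
  rw [e, Gamma_add_nat hx, Gamma_add_nat (by positivity)]
  have := poch_pos (add_pos hx hy) k
  have := Real.Gamma_pos_of_pos (add_pos hx hy)
  field_simp

theorem betaR_comm (x y : ℝ) : betaR x y = betaR y x := by
  unfold betaR; rw [add_comm, mul_comm (Real.Gamma x)]

theorem poch_ratio {c : ℝ} (hc : 0 < c) (k : ℕ) :
    poch c k / poch (c + 1) k = c / (c + k) := by
  have : poch c k * (c + k) = c * poch (c + 1) k := by
    induction k with
    | zero => simp [poch]
    | succ n ih =>
      rw [poch_succ, poch_succ, ih]; push_cast; ring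
  have := poch_pos (show 0 < c + 1 by positivity) k
  rw [div_eq_div_iff (by positivity) (by positivity)]
  assumption

theorem beta_int {a b : ℝ} (ha : 0 < a) (hb : 0 < b) :
    IntegrableOn (fun t : ℝ => t ^ (a - 1) * (1 - t) ^ (b - 1)) (Set.Ioo 0 1) ∧
    ∫ t in Set.Ioo (0:ℝ) 1, t ^ (a - 1) * (1 - t) ^ (b - 1) = betaR a b := by
  have hc := Complex.betaIntegral_convergent (u := a) (v := b) (by simpa) (by simpa)
  rw [intervalIntegrable_iff_integrableOn_Ioo_of_le zero_le_one] at hc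
  have key : Set.EqOn (fun x : ℝ => (x:ℂ) ^ ((a:ℂ) - 1) * (1 - (x:ℂ)) ^ ((b:ℂ) - 1))
      (fun t : ℝ => ((t ^ (a - 1) * (1 - t) ^ (b - 1) : ℝ) : ℂ)) (Set.Ioo 0 1) := by
    intro x hx
    simp only [Complex.ofReal_mul]
    rw [Complex.ofReal_cpow hx.1.le, Complex.ofReal_cpow (by linarith [hx.2])]
    push_cast; rfl
  have hc2 := (integrableOn_congr_fun key measurableSet_Ioo).1 hc
  refine ⟨?_, ?_⟩
  · have := hc2.re
    simpa [IntegrableOn] using this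
  · have h := ProbabilityTheory.beta_eq_betaIntegralReal a b ha hb
    rw [Complex.betaIntegral, intervalIntegral.integral_of_le zero_le_one, integral_Ioc_eq_integral_Ioo,
      setIntegral_congr_fun measurableSet_Ioo key, integral_complex_ofReal, Complex.ofReal_re] at h
    rw [← h]; rfl

theorem key_int {p a b : ℝ} (hp : 0 < p) (hb : b < 1) (hab : 0 < a + b - 1 / p) :
    IntegrableOn (fun x : ℝ => x ^ (-(a * p)) * (x ^ p - 1) ^ (-b)) (Set.Ioi 1) ∧
    ∫ x in Set.Ioi (1:ℝ), x ^ (-(a * p)) * (x ^ p - 1) ^ (-b) =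
      1 / p * betaR (1 - b) (a + b - 1 / p) := by
  obtain ⟨h1, h2⟩ := beta_int hab (show 0 < 1 - b by linarith)
  set g : ℝ → ℝ := (Set.Ioo (0:ℝ) 1).indicator
    (fun t : ℝ => 1 / p * (t ^ (a + b - 1 / p - 1) * (1 - t) ^ (1 - b - 1))) with hg
  have hgi : IntegrableOn g (Set.Ioi 0) := by
    apply Integrable.integrableOn
    rw [hg, integrable_indicator_iff measurableSet_Ioo]
    exact h1.const_mul _
  have hgv : ∫ t in Set.Ioi 0, g t = 1 / p * betaR (1 - b) (a + b - 1 / p) := by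
    rw [hg, setIntegral_indicator measurableSet_Ioo,
      Set.inter_eq_right.2 Set.Ioo_subset_Ioi_self, integral_const_mul, h2, betaR_comm]
  have hpn : -p ≠ 0 := by linarith
  have e : Set.EqOn (fun x : ℝ => (|(-p)| * x ^ (-p - 1)) • g (x ^ (-p)))
      ((Set.Ioi (1:ℝ)).indicator (fun x : ℝ => x ^ (-(a * p)) * (x ^ p - 1) ^ (-b)))
      (Set.Ioi 0) := by
    intro x hx
    have hx : 0 < x := hx
    simp only [smul_eq_mul, hg]
    by_cases hx1 : 1 < x
    · rw [Set.indicator_of_mem (show x ∈ Set.Ioi (1:ℝ) from hx1), Set.indicator_of_mem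
        (show x ^ (-p) ∈ Set.Ioo (0:ℝ) 1 from
          ⟨by positivity, Real.rpow_lt_one_of_one_lt_of_neg hx1 (by linarith)⟩)]
      have hxp : 1 < x ^ p := Real.one_lt_rpow hx1 hp
      have e1 : 1 - x ^ (-p) = (x ^ p - 1) * x ^ (-p) := by
        rw [sub_mul, ← Real.rpow_add hx]; simp
      rw [e1, Real.mul_rpow (by linarith) (by positivity), ← Real.rpow_mul hx.le,
        ← Real.rpow_mul hx.le, abs_neg, abs_of_pos hp]
      have e2 : x ^ (-(a * p)) =
          x ^ (-p - 1) * (x ^ (-p * (a + b - 1 / p - 1)) * x ^ (-p * (1 - b - 1))) := by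
        rw [← Real.rpow_add hx, ← Real.rpow_add hx]
        congr 1; field_simp; ring
      rw [e2, show 1 - b - 1 = -b by ring]
      field_simp
    · rw [Set.indicator_of_notMem (show x ∉ Set.Ioi (1:ℝ) from hx1), Set.indicator_of_notMem,
        mul_zero]
      intro h
      have := Real.one_le_rpow_of_pos_of_le_one_of_nonpos hx (not_lt.1 hx1) (show -p ≤ 0 by linarith)
      linarith [h.2]
  have i1 := (integrableOn_Ioi_comp_rpow_iff g hpn).2 hgi
  have i2 := integral_comp_rpow_Ioi g hpn
  rw [integrableOn_congr_fun e measurableSet_Ioi, IntegrableOn,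
    integrable_indicator_iff measurableSet_Ioi, IntegrableOn, Measure.restrict_restrict measurableSet_Ioi,
    Set.inter_eq_left.2 (Set.Ioi_subset_Ioi zero_le_one)] at i1
  rw [setIntegral_congr_fun measurableSet_Ioi e, setIntegral_indicator measurableSet_Ioi,
    Set.inter_eq_right.2 (Set.Ioi_subset_Ioi zero_le_one), hgv] at i2
  exact ⟨i1, i2⟩

theorem tail_hasSum {p q y : ℝ} (hp : 1 < p) (hpq : p < q) (hy : 1 < y) :
    HasSum (fun k : ℕ => poch (1 - 1 / q) k / (Nat.factorial k : ℝ) *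
        (y ^ (-(p * k + (1 - p / q))) / (p * k + (1 - p / q))))
      (∫ v in Set.Ioi y, (v ^ p - 1) ^ (1 / q - 1) * v ^ (p - 2)) := by
  have hq : 0 < q := by linarith
  have hc : 0 < 1 - p / q := by rw [sub_pos, div_lt_one hq]; exact hpq
  have ha : 0 < 1 - 1 / q := by rw [sub_pos, div_lt_one hq]; linarith
  have hy0 : 0 < y := by linarith
  have hpk : ∀ k : ℕ, 0 < p * k + (1 - p / q) := fun k => by positivity
  have hpo : ∀ k : ℕ, 0 < poch (1 - 1 / q) k / (Nat.factorial k : ℝ) := fun k =>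
    div_pos (poch_pos ha k) (by positivity)
  set F : ℕ → ℝ → ℝ := fun k v => poch (1 - 1 / q) k / (Nat.factorial k : ℝ) *
    v ^ (-(p * k + (1 - p / q)) - 1) with hF
  have hFi : ∀ k, IntegrableOn (F k) (Set.Ioi y) := fun k =>
    Integrable.const_mul (integrableOn_Ioi_rpow_of_lt (by linarith [hpk k]) hy0) _
  have hFv : ∀ k, ∫ v in Set.Ioi y, F k v = poch (1 - 1 / q) k / (Nat.factorial k : ℝ) *
        (y ^ (-(p * k + (1 - p / q))) / (p * k + (1 - p / q))) := by
    intro k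
    rw [hF, integral_const_mul, integral_Ioi_rpow_of_lt (by linarith [hpk k]) hy0,
      sub_add_cancel, neg_div_neg_eq]
  have hFn : ∀ k, ∫ v in Set.Ioi y, ‖F k v‖ = ∫ v in Set.Ioi y, F k v := by
    intro k
    refine setIntegral_congr_fun measurableSet_Ioi fun v hv => ?_
    have hv : y < v := hv
    have := hpo k
    have : 0 < v := by linarith
    exact Real.norm_of_nonneg (by simp only [hF]; positivity)
  have hpow : ∀ v : ℝ, 1 < v → v ^ (-p) < 1 := fun v hv =>
    Real.rpow_lt_one_of_one_lt_of_neg hv (by linarith)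
  have hs : Summable fun k => ∫ v in Set.Ioi y, ‖F k v‖ := by
    have h1 := (binom_hasSum (1 - 1 / q) (y ^ (-p)) (by positivity) (hpow y hy)).summable.mul_right
      (y ^ (-(1 - p / q)) / (1 - p / q))
    refine h1.of_nonneg_of_le (fun k => integral_nonneg fun _ => norm_nonneg _) fun k => ?_
    rw [hFn, hFv, mul_assoc]
    refine mul_le_mul_of_nonneg_left ?_ (hpo k).le
    have e : y ^ (-(p * k + (1 - p / q))) = (y ^ (-p)) ^ k * y ^ (-(1 - p / q)) := by
      rw [← Real.rpow_natCast, ← Real.rpow_mul hy0.le, ← Real.rpow_add hy0]; congr 1; ring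
    rw [e, ← mul_div_assoc]
    gcongr
    have : 0 ≤ p * k := by positivity
    linarith
  have H := hasSum_integral_of_summable_integral_norm (μ := volume.restrict (Set.Ioi y)) hFi hs
  simp only [hFv] at H
  refine (congrArg (fun t : ℝ => HasSum _ t) ?_).mpr H
  refine setIntegral_congr_fun measurableSet_Ioi fun v hv => ?_
  have hv : y < v := hv
  have hv0 : 0 < v := by linarith
  have hv1 : 1 < v := by linarith
  have h2 := (binom_hasSum (1 - 1 / q) (v ^ (-p)) (by positivity) (hpow v hv1)).mul_right
    (v ^ (p / q - 2))
  have e : ∀ k : ℕ, F k v = poch (1 - 1 / q) k / (Nat.factorial k : ℝ) * (v ^ (-p)) ^ k *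
      v ^ (p / q - 2) := by
    intro k
    rw [← Real.rpow_natCast, ← Real.rpow_mul hv0.le, mul_assoc, ← Real.rpow_add hv0]
    simp only [hF]; congr 2; ring
  simp only [e]
  rw [h2.tsum_eq]
  have hvp : 1 < v ^ p := Real.one_lt_rpow hv1 (by linarith)
  have e1 : 1 - v ^ (-p) = (v ^ p - 1) * v ^ (-p) := by
    rw [sub_mul, ← Real.rpow_add hv0]; simp
  rw [e1, Real.mul_rpow (by linarith) (by positivity), ← Real.rpow_mul hv0.le, mul_assoc,
    ← Real.rpow_add hv0]
  congr 2 <;> · field_simp; ring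

theorem f_int {p q : ℝ} (hp : 1 < p) (hpq : p < q) :
    IntegrableOn (fun v : ℝ => (v ^ p - 1) ^ (1 / q - 1) * v ^ (p - 2)) (Set.Ioi 1) ∧
    ∫ v in Set.Ioi (1:ℝ), (v ^ p - 1) ^ (1 / q - 1) * v ^ (p - 2) =
      1 / p * betaR (1 / p - 1 / q) (1 / q) := by
  have hq : 0 < q := by linarith
  have hp0 : 0 < p := by linarith
  have h := key_int (p := p) (a := (2 - p) / p) (b := 1 - 1 / q) hp0
    (by have : 0 < 1 / q := by positivity
        linarith)
    (by have : 1 / q < 1 / p := one_div_lt_one_div_of_lt hp0 hpq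
        have e : (2 - p) / p + (1 - 1 / q) - 1 / p = 1 / p - 1 / q := by field_simp; ring
        linarith)
  have e : (2 - p) / p + (1 - 1 / q) - 1 / p = 1 / p - 1 / q := by field_simp; ring
  rw [e, sub_sub_cancel, neg_sub, div_mul_cancel₀ _ hp0.ne', neg_sub, betaR_comm] at h
  simpa only [mul_comm] using h

theorem arccosh_pq_integral (p q α β s : ℝ) (hp : 1 < p) (hpq : p < q)
    (hs : 1 ≤ s) (hβ : β < 1) (hαβ : 1 < (α + β) * p) :
    (∫ x in Set.Ioi (1:ℝ),
        ((p / q) * ∫ v in (1:ℝ)..(s * x), (v ^ p - 1) ^ (1 / q - 1) * v ^ (p - 2)) *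
          x ^ (-(α * p)) * (x ^ p - 1) ^ (-β)) =
      (1 / (p * q)) * betaR (1 / p - 1 / q) (1 / q) * betaR (1 - β) (β + α - 1 / p) +
      (s ^ (p / q - 1) / (p - q)) * betaR (β + α - 1 / q) (1 - β) *
        ∑' k : ℕ, poch (1 - 1 / q) k * poch (β + α - 1 / q) k * poch (1 / p - 1 / q) k /
          (poch (α + 1 - 1 / q) k * poch (1 / p - 1 / q + 1) k * (Nat.factorial k : ℝ)) *
            s ^ (-(p * (k : ℝ))) := by
  have hq : 0 < q := by linarith
  have hp0 : 0 < p := by linarith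
  have hs0 : 0 < s := by linarith
  have hab : 0 < α + β - 1 / p := by
    rw [sub_pos, div_lt_iff₀ hp0]; exact hαβ
  have hc : 0 < 1 / p - 1 / q := sub_pos.2 (one_div_lt_one_div_of_lt hp0 hpq)
  have ha : 0 < 1 - 1 / q := by rw [sub_pos, div_lt_one hq]; linarith
  have hc' : 0 < 1 - p / q := by rw [sub_pos, div_lt_one hq]; exact hpq
  have hpk : ∀ k : ℕ, 0 < p * k + (1 - p / q) := fun k => by positivity
  obtain ⟨fi, fv⟩ := f_int hp hpq
  set f : ℝ → ℝ := fun v => (v ^ p - 1) ^ (1 / q - 1) * v ^ (p - 2) with hf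
  have hf0 : ∀ v, 1 < v → 0 ≤ f v := by
    intro v hv
    have hvp : 1 < v ^ p := Real.one_lt_rpow hv (by linarith)
    have : 0 < v ^ p - 1 := by linarith
    have : 0 < v := by linarith
    simp only [hf]; positivity
  obtain ⟨wi, wv⟩ := key_int (p := p) (a := α) (b := β) hp0 hβ hab
  set w : ℝ → ℝ := fun x => x ^ (-(α * p)) * (x ^ p - 1) ^ (-β) with hw
  have hw0 : ∀ v, 1 < v → 0 ≤ w v := by
    intro v hv
    have hvp : 1 < v ^ p := Real.one_lt_rpow hv (by linarith)
    have : 0 < v ^ p - 1 := by linarith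
    have : 0 < v := by linarith
    simp only [hw]; positivity
  set C := ∫ v in Set.Ioi (1:ℝ), f v with hC
  set T : ℝ → ℝ := fun x => ∫ v in Set.Ioi (s * x), f v with hT
  have hsx : ∀ x, 1 < x → 1 < s * x := fun x hx => by nlinarith
  have hA : ∀ x, 1 < x → ∫ v in (1:ℝ)..(s * x), f v = C - T x := by
    intro x hx
    rw [hC, hT, intervalIntegral.integral_Ioi_sub_Ioi fi (hsx x hx).le,
      intervalIntegral.integral_of_le (hsx x hx).le]
  have hT0 : ∀ x, 1 < x → 0 ≤ T x := fun x hx =>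
    setIntegral_nonneg measurableSet_Ioi fun v hv => hf0 v ((hsx x hx).trans hv)
  have hTC : ∀ x, 1 < x → T x ≤ C := by
    intro x hx
    have : 0 ≤ ∫ v in (1:ℝ)..(s * x), f v := by
      rw [intervalIntegral.integral_of_le (hsx x hx).le]
      exact setIntegral_nonneg measurableSet_Ioc fun v hv => hf0 v hv.1
    linarith [hA x hx]
  set D : ℕ → ℝ := fun k => poch (1 - 1 / q) k / (Nat.factorial k : ℝ) *
    (s ^ (-(p * k + (1 - p / q))) / (p * k + (1 - p / q))) with hD
  have hD0 : ∀ k, 0 ≤ D k := by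
    intro k
    have := poch_pos ha k
    have := hpk k
    simp only [hD]; positivity
  set G : ℕ → ℝ → ℝ := fun k x =>
    D k * (x ^ (-((k + (1 / p - 1 / q) + α) * p)) * (x ^ p - 1) ^ (-β)) with hG
  have hG0 : ∀ k x, 1 < x → 0 ≤ G k x := by
    intro k v hv
    have hvp : 1 < v ^ p := Real.one_lt_rpow hv (by linarith)
    have : 0 < v ^ p - 1 := by linarith
    have : 0 < v := by linarith
    have := hD0 k
    simp only [hG]; positivity
  have hK : ∀ k : ℕ, 0 < (k + (1 / p - 1 / q) + α) + β - 1 / p := by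
    intro k
    have : (0:ℝ) ≤ k := by positivity
    linarith
  have hGi : ∀ k, IntegrableOn (G k) (Set.Ioi 1) := fun k =>
    (key_int hp0 hβ (hK k)).1.const_mul _
  have hGv : ∀ k, ∫ x in Set.Ioi (1:ℝ), G k x =
      D k * (1 / p * betaR (1 - β) ((k + (1 / p - 1 / q) + α) + β - 1 / p)) := by
    intro k
    rw [hG, integral_const_mul, (key_int hp0 hβ (hK k)).2]
  have hGn : ∀ k, ∫ x in Set.Ioi (1:ℝ), ‖G k x‖ = ∫ x in Set.Ioi (1:ℝ), G k x := fun k =>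
    setIntegral_congr_fun measurableSet_Ioi fun v hv => Real.norm_of_nonneg (hG0 k v hv)
  have hGs : ∀ x, 1 < x → HasSum (fun k => G k x) (T x * w x) := by
    intro x hx
    have hx0 : 0 < x := by linarith
    have h := (tail_hasSum hp hpq (hsx x hx)).mul_right (w x)
    refine (congrArg (fun g : ℕ → ℝ => HasSum g (T x * w x)) ?_).mpr h
    funext k
    simp only [hG, hD, hw]
    have e : x ^ (-((k + (1 / p - 1 / q) + α) * p)) =
        x ^ (-(p * k + (1 - p / q))) * x ^ (-(α * p)) := by
      rw [← Real.rpow_add hx0]; congr 1; field_simp; ring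
    rw [e, Real.mul_rpow hs0.le hx0.le]
    ring
  have hTm : AEStronglyMeasurable (fun x => T x * w x) (volume.restrict (Set.Ioi 1)) := by
    refine aestronglyMeasurable_of_tendsto_ae Filter.atTop
      (f := fun n x => ∑ k ∈ Finset.range n, G k x) (fun n => ?_) ?_
    · exact Finset.aestronglyMeasurable_fun_sum _ fun k _ => (hGi k).aestronglyMeasurable
    · filter_upwards [ae_restrict_mem measurableSet_Ioi] with x hx
      exact (hGs x hx).tendsto_sum_nat
  have hTi : IntegrableOn (fun x => T x * w x) (Set.Ioi 1) := by
    refine (wi.const_mul C).mono' hTm ?_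
    filter_upwards [ae_restrict_mem measurableSet_Ioi] with x hx
    rw [Real.norm_of_nonneg (mul_nonneg (hT0 x hx) (hw0 x hx))]
    exact mul_le_mul_of_nonneg_right (hTC x hx) (hw0 x hx)
  have hsum : Summable fun k => ∫ x in Set.Ioi (1:ℝ), ‖G k x‖ := by
    refine summable_of_sum_range_le (c := ∫ x in Set.Ioi (1:ℝ), T x * w x)
      (fun k => integral_nonneg fun _ => norm_nonneg _) fun n => ?_
    simp only [hGn]
    rw [← integral_finsetSum _ fun k _ => hGi k]
    refine setIntegral_mono_on (integrable_finsetSum _ fun k _ => hGi k) hTi measurableSet_Ioi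
      fun x hx => ?_
    exact sum_le_hasSum _ (fun k _ => hG0 k x hx) (hGs x hx)
  have H := hasSum_integral_of_summable_integral_norm hGi hsum
  have H2 : ∫ x in Set.Ioi (1:ℝ), ∑' k, G k x = ∫ x in Set.Ioi (1:ℝ), T x * w x :=
    setIntegral_congr_fun measurableSet_Ioi fun x hx => (hGs x hx).tsum_eq
  rw [H2] at H
  have H3 := H.tsum_eq
  simp only [hGv] at H3
  have L : (∫ x in Set.Ioi (1:ℝ), ((p / q) * ∫ v in (1:ℝ)..(s * x), f v) *
          x ^ (-(α * p)) * (x ^ p - 1) ^ (-β)) =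
      ∫ x in Set.Ioi (1:ℝ), ((p / q * C) * w x - p / q * (T x * w x)) := by
    refine setIntegral_congr_fun measurableSet_Ioi fun x hx => ?_
    simp only [hA x hx, hw]; ring
  rw [L, integral_sub (wi.const_mul _) (hTi.const_mul _), integral_const_mul, integral_const_mul,
    wv, ← H3, fv, sub_eq_add_neg, ← tsum_mul_left, ← tsum_neg, ← tsum_mul_left,
    add_comm α β]
  congr 1
  · field_simp
  · congr 1
    ext k
    have e1 : (k + (1 / p - 1 / q) + α) + β - 1 / p = (β + α - 1 / q) + k := by ring
    have e2 : β + α - 1 / q + (1 - β) = α + 1 - 1 / q := by ring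
    have hx : 0 < β + α - 1 / q := by linarith
    have e3 : p * k + (1 - p / q) = p * (1 / p - 1 / q + k) := by field_simp; ring
    have e4 : s ^ (-(p * k + (1 - p / q))) = s ^ (p / q - 1) * s ^ (-(p * (k : ℝ))) := by
      rw [← Real.rpow_add hs0]; congr 1; ring
    have hr := poch_ratio hc k
    have e5 : -(p / q) = (1 / p - 1 / q) * (p * p / (p - q)) := by
      have : p - q ≠ 0 := by linarith
      field_simp; ring
    rw [betaR_comm, e1, betaR_add_nat hx (by linarith) k, e2]
    simp only [hD]
    rw [e4, e3]
    have e6 : 1 / (1 / p - 1 / q + k) = poch (1 / p - 1 / q) k / poch (1 / p - 1 / q + 1) k /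
      (1 / p - 1 / q) := by
        rw [hr, div_div, mul_comm, ← div_div, div_self hc.ne']
    have hX2 : poch (1 / p - 1 / q + 1) k ≠ 0 :=
      (poch_pos (by linarith) k).ne'
    have hZ : poch (α + 1 - 1 / q) k ≠ 0 := (poch_pos (by linarith) k).ne'
    have hfa : (Nat.factorial k : ℝ) ≠ 0 := by positivity
    have hpq' : p - q ≠ 0 := by linarith
    have hcn := hc.ne'
    rw [← neg_mul, e5, ← div_div, div_eq_mul_one_div _ (1 / p - 1 / q + k), e6]
    generalize poch (1 / p - 1 / q) k = X1 at *
    generalize poch (1 / p - 1 / q + 1) k = X2 at *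
    generalize 1 / p - 1 / q = c at *
    field_simp
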